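/- arXiv:2201.03854 — 2 statements merged into one kernel-verified Lean document; each statement's English description precedes it below -/
import Mathlib

section
/- For the family 𝔤₁(λ, r, w₁, w₂) with λ ≠ 0 and r ≠ 0, the structure J is almost Kähler, i.e. dω(E,F,G) = 0 for all E, F, G ∈ 𝔤, if and only if w₁ = 0. -/
noncomputable section

/-- The bilinear antisymmetric bracket on ℝ⁴ determined by the structure constants. -/
def bk (lam r w₁ w₂ : ℝ) (E F : Fin 4 → ℝ) : Fin 4 → ℝ :=
  (E 0 * F 1 - E 1 * F 0) • (![-r, 0, 0, -(r * w₁ / lam)] : Fin 4 → ℝ) +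
  (E 0 * F 2 - E 2 * F 0) • (![0, 0, 0, -w₁] : Fin 4 → ℝ) +
  (E 0 * F 3 - E 3 * F 0) • (![0, 0, 0, 0] : Fin 4 → ℝ) +
  (E 1 * F 2 - E 2 * F 1) • (![0, 0, 0, -w₂] : Fin 4 → ℝ) +
  (E 1 * F 3 - E 3 * F 1) • (![0, 0, 0, 0] : Fin 4 → ℝ) +
  (E 2 * F 3 - E 3 * F 2) • (![0, 0, 0, -lam] : Fin 4 → ℝ)

/-- The almost Hermitian structure J with J(X)=Y, J(Y)=-X, J(Z)=W, J(W)=-Z. -/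
def Jm (E : Fin 4 → ℝ) : Fin 4 → ℝ := ![-E 1, E 0, -E 3, E 2]

/-- The standard inner product, making {X,Y,Z,W} orthonormal. -/
def ip (E F : Fin 4 → ℝ) : ℝ := E 0 * F 0 + E 1 * F 1 + E 2 * F 2 + E 3 * F 3

/-- The Kähler form ω(E,F) = ⟨JE, F⟩. -/
def om (E F : Fin 4 → ℝ) : ℝ := ip (Jm E) F

/-- The left-invariant exterior derivative of the Kähler form. -/
def dom (lam r w₁ w₂ : ℝ) (E F G : Fin 4 → ℝ) : ℝ :=
  -om (bk lam r w₁ w₂ E F) G - om (bk lam r w₁ w₂ F G) E - om (bk lam r w₁ w₂ G E) F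

/-!
Write `eᵃ` for the dual basis of `X, Y, Z, W`, numbered from `0`. As `[E, F]` lies in the span of
`X` and `W`, `ω([E, F], G)` is a combination of terms `eⁱ ∧ eʲ (E, F) * eᵏ (G)` with `k = 1` or
`k = 2`, and the cyclic sum defining `dω` turns each of these into `eⁱ ∧ eʲ ∧ eᵏ`. All of them have
a repeated index except the one coming from the `W`-component of `[Y, X]`, which leaves
`dω = -(r w₁ / λ) e⁰ ∧ e¹ ∧ e²`.
-/

section CoordForm

variable {R ι : Type*} [CommRing R]

/-- The coordinate `n`-form `e^{v 0} ∧ ⋯ ∧ e^{v (n - 1)}` on `ι → R`, normalised as the determinant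
of the coordinates `v 0, …, v (n - 1)` of its arguments. -/
def coordForm {n : ℕ} (v : Fin n → ι) : (ι → R) [⋀^Fin n]→ₗ[R] R :=
  Matrix.detRowAlternating.compLinearMap (LinearMap.funLeft R R v)

theorem coordForm_apply {n : ℕ} (v : Fin n → ι) (E : Fin n → ι → R) :
    coordForm v E = (Matrix.of fun a b => E a (v b)).det :=
  rfl

theorem coordForm_eq_zero_of_eq {n : ℕ} {v : Fin n → ι} {a b : Fin n} (hab : a ≠ b)
    (hv : v a = v b) : coordForm (R := R) v = 0 := by
  ext E
  exact Matrix.det_zero_of_column_eq hab fun c => congrArg (E c) hv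

theorem coordForm_single [DecidableEq ι] {n : ℕ} {v : Fin n → ι} (hv : v.Injective) :
    coordForm v (fun a => (Pi.single (v a) 1 : ι → R)) = 1 := by
  have hone : (Matrix.of fun a b => (Pi.single (v a) 1 : ι → R) (v b)) = 1 := by
    ext a b
    simp only [Matrix.of_apply, Pi.single_apply, Matrix.one_apply, hv.eq_iff, eq_comm]
  rw [coordForm_apply, hone, Matrix.det_one]

theorem coordForm_two (i j : ι) (E F : ι → R) :
    coordForm ![i, j] ![E, F] = E i * F j - E j * F i := by
  simp [coordForm_apply, Matrix.det_fin_two]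

theorem coordForm_three_eq_cyclic_sum (i j k : ι) (E F G : ι → R) :
    coordForm ![i, j, k] ![E, F, G] =
      coordForm ![i, j] ![E, F] * G k + coordForm ![i, j] ![F, G] * E k +
        coordForm ![i, j] ![G, E] * F k := by
  simp only [coordForm_two]
  simp only [coordForm_apply, Matrix.det_fin_three, Matrix.of_apply, Matrix.cons_val]
  ring

end CoordForm

theorem om_eq_coordForm_add_coordForm (E F : Fin 4 → ℝ) :
    om E F = coordForm ![0, 1] ![E, F] + coordForm ![2, 3] ![E, F] := by
  simp only [om, ip, Jm, coordForm_two, Matrix.cons_val]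
  ring

theorem bk_eq_vec_coordForm (lam r w₁ w₂ : ℝ) (E F : Fin 4 → ℝ) :
    bk lam r w₁ w₂ E F =
      ![-r * coordForm ![0, 1] ![E, F], 0, 0,
        -(r * w₁ / lam * coordForm ![0, 1] ![E, F] + w₁ * coordForm ![0, 2] ![E, F] +
          w₂ * coordForm ![1, 2] ![E, F] + lam * coordForm ![2, 3] ![E, F])] := by
  ext a
  simp only [bk, coordForm_two, Pi.add_apply, Pi.smul_apply, smul_eq_mul]
  fin_cases a <;> dsimp <;> ring

theorem om_bk (lam r w₁ w₂ : ℝ) (E F G : Fin 4 → ℝ) :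
    om (bk lam r w₁ w₂ E F) G =
      -r * (coordForm ![0, 1] ![E, F] * G 1) +
        r * w₁ / lam * (coordForm ![0, 1] ![E, F] * G 2) +
        w₁ * (coordForm ![0, 2] ![E, F] * G 2) +
        w₂ * (coordForm ![1, 2] ![E, F] * G 2) +
        lam * (coordForm ![2, 3] ![E, F] * G 2) := by
  rw [om_eq_coordForm_add_coordForm, bk_eq_vec_coordForm,
    coordForm_two _ _ _ G, coordForm_two _ _ _ G]
  simp only [Matrix.cons_val]
  ring

theorem dom_eq_mul_coordForm (lam r w₁ w₂ : ℝ) (E F G : Fin 4 → ℝ) :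
    dom lam r w₁ w₂ E F G = -(r * w₁ / lam) * coordForm ![0, 1, 2] ![E, F, G] := by
  have hijj (i j : Fin 4) : coordForm (R := ℝ) ![i, j, j] = 0 :=
    coordForm_eq_zero_of_eq (a := 1) (b := 2) (by decide) rfl
  have hiji (i j : Fin 4) : coordForm (R := ℝ) ![i, j, i] = 0 :=
    coordForm_eq_zero_of_eq (a := 0) (b := 2) (by decide) rfl
  calc dom lam r w₁ w₂ E F G
      = r * coordForm ![0, 1, 1] ![E, F, G] - r * w₁ / lam * coordForm ![0, 1, 2] ![E, F, G] -
          w₁ * coordForm ![0, 2, 2] ![E, F, G] - w₂ * coordForm ![1, 2, 2] ![E, F, G] -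
          lam * coordForm ![2, 3, 2] ![E, F, G] := by
        simp only [dom, om_bk, coordForm_three_eq_cyclic_sum]
        ring
    _ = -(r * w₁ / lam) * coordForm ![0, 1, 2] ![E, F, G] := by
        simp only [hijj, hiji, AlternatingMap.zero_apply]
        ring

theorem dom_single_zero_one_two (lam r w₁ w₂ : ℝ) :
    dom lam r w₁ w₂ (Pi.single 0 1) (Pi.single 1 1) (Pi.single 2 1) = -(r * w₁ / lam) := by
  have hvec : ![Pi.single 0 1, Pi.single 1 1, Pi.single 2 1] =
      fun a => (Pi.single (![0, 1, 2] a) 1 : Fin 4 → ℝ) := by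
    ext a
    fin_cases a <;> rfl
  rw [dom_eq_mul_coordForm, hvec, coordForm_single (by decide), mul_one]

theorem g1_almostKaehler_iff (lam r w₁ w₂ : ℝ) (hlam : lam ≠ 0) (hr : r ≠ 0) :
    (∀ E F G : Fin 4 → ℝ, dom lam r w₁ w₂ E F G = 0) ↔ w₁ = 0 := by
  constructor
  · intro hclosed
    have hcoeff : -(r * w₁ / lam) = 0 :=
      (dom_single_zero_one_two lam r w₁ w₂).symm.trans (hclosed _ _ _)
    simpa [hlam, hr] using hcoeff
  · rintro rfl E F G
    rw [dom_eq_mul_coordForm, mul_zero, zero_div, neg_zero, zero_mul]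

end
end

section
/- For the family 𝔤₁(λ, r, w₁, w₂) with λ ≠ 0 and r ≠ 0, the structure J is integrable, i.e. the Nijenhuis tensor N(E,F) = 0 for all E, F ∈ 𝔤, if and only if w₁ = 0 and w₂ = 0. -/
noncomputable section

/-- The Nijenhuis tensor of J. -/
def NT (lam r w₁ w₂ : ℝ) (E F : Fin 4 → ℝ) : Fin 4 → ℝ :=
  bk lam r w₁ w₂ E F + Jm (bk lam r w₁ w₂ (Jm E) F) + Jm (bk lam r w₁ w₂ E (Jm F)) -
    bk lam r w₁ w₂ (Jm E) (Jm F)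

/-! Over any commutative ring, `J² = -1` forces `N(JE, F) = N(E, JF) = -J N(E, F)`, and `N` is
alternating when the bracket is. If `X, Z, JX, JZ` span the space, `N` is therefore determined by
the single value `N(X, Z)`, which for `𝔤₁` is `w₂ Z - w₁ W`. -/

section Nijenhuis

variable {R V : Type*} [CommRing R] [AddCommGroup V] [Module R V]

/-- The Nijenhuis tensor of an endomorphism `J`, as a bilinear map; its vanishing is the
integrability of `J` when `J² = -1`. The bracket `B` is any bilinear map, not necessarily Lie. -/
def nijenhuisTensor (B : V →ₗ[R] V →ₗ[R] V) (J : V →ₗ[R] V) : V →ₗ[R] V →ₗ[R] V :=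
  B + (B ∘ₗ J).compr₂ J + (B.compl₂ J).compr₂ J - B.compl₁₂ J J

variable {B : V →ₗ[R] V →ₗ[R] V} {J : V →ₗ[R] V}

theorem nijenhuisTensor_apply (E F : V) :
    nijenhuisTensor B J E F = B E F + J (B (J E) F) + J (B E (J F)) - B (J E) (J F) :=
  rfl

theorem nijenhuisTensor_isAlt (hB : B.IsAlt) : (nijenhuisTensor B J).IsAlt := fun E => by
  rw [nijenhuisTensor_apply, hB.self_eq_zero, hB.self_eq_zero, ← hB.neg E (J E), map_neg]
  abel

theorem nijenhuisTensor_map_left (hJ : ∀ v, J (J v) = -v) (E F : V) :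
    nijenhuisTensor B J (J E) F = -J (nijenhuisTensor B J E F) := by
  simp only [nijenhuisTensor_apply, hJ, map_add, map_sub, map_neg, LinearMap.neg_apply]
  abel

theorem nijenhuisTensor_map_right (hJ : ∀ v, J (J v) = -v) (E F : V) :
    nijenhuisTensor B J E (J F) = -J (nijenhuisTensor B J E F) := by
  simp only [nijenhuisTensor_apply, hJ, map_add, map_sub, map_neg]
  abel

theorem nijenhuisTensor_eq_zero_of_span_union_image_eq_top (hJ : ∀ v, J (J v) = -v) {s : Set V}
    (hs : Submodule.span R (s ∪ J '' s) = ⊤)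
    (h : ∀ u ∈ s, ∀ v ∈ s, nijenhuisTensor B J u v = 0) : nijenhuisTensor B J = 0 := by
  have eq_zero_of_mem : ∀ u ∈ s, nijenhuisTensor B J u = 0 := by
    intro u hu
    refine LinearMap.ext_on hs ?_
    rintro _ (hv | ⟨v, hv, rfl⟩)
    · exact h u hu _ hv
    · simp [nijenhuisTensor_map_right hJ, h u hu v hv]
  refine LinearMap.ext_on hs ?_
  rintro _ (hu | ⟨u, hu, rfl⟩)
  · exact eq_zero_of_mem _ hu
  · ext v
    simp [nijenhuisTensor_map_left hJ, eq_zero_of_mem u hu]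

theorem nijenhuisTensor_eq_zero_iff_of_span_eq_top (hB : B.IsAlt) (hJ : ∀ v, J (J v) = -v)
    {x z : V} (hspan : Submodule.span R {x, z, J x, J z} = ⊤) :
    nijenhuisTensor B J = 0 ↔ nijenhuisTensor B J x z = 0 := by
  refine ⟨fun h => by simp [h], fun hxz => ?_⟩
  have hN : (nijenhuisTensor B J).IsAlt := nijenhuisTensor_isAlt hB
  have hzx : nijenhuisTensor B J z x = 0 := by rw [← hN.neg, hxz, neg_zero]
  have hs : Submodule.span R ({x, z} ∪ J '' {x, z}) = ⊤ := by
    rwa [Set.image_pair, Set.insert_union, Set.singleton_union]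
  refine nijenhuisTensor_eq_zero_of_span_union_image_eq_top hJ hs ?_
  rintro u (rfl | rfl) v (rfl | rfl)
  exacts [hN.self_eq_zero _, hxz, hzx, hN.self_eq_zero _]

theorem g1_integrable_iff_general (hB : B.IsAlt) (hJ : ∀ v, J (J v) = -v) {x z : V}
    (hspan : Submodule.span R {x, z, J x, J z} = ⊤) (hz : LinearIndependent R ![z, J z])
    {w₁ w₂ : R} (hzx : B z x = w₁ • J z) (hzJx : B z (J x) = w₂ • J z)
    (hxJz : B x (J z) = 0) (hJxJz : B (J x) (J z) = 0) :
    (∀ E F, nijenhuisTensor B J E F = 0) ↔ w₁ = 0 ∧ w₂ = 0 := by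
  have hN : nijenhuisTensor B J x z = w₂ • z + (-w₁) • J z := by
    rw [nijenhuisTensor_apply, ← hB.neg z x, ← hB.neg z (J x), hzx, hzJx, hxJz, hJxJz, map_neg,
      map_smul, hJ, map_zero]
    module
  calc (∀ E F, nijenhuisTensor B J E F = 0)
    _ ↔ nijenhuisTensor B J = 0 := by simp only [LinearMap.ext_iff, LinearMap.zero_apply]
    _ ↔ nijenhuisTensor B J x z = 0 := nijenhuisTensor_eq_zero_iff_of_span_eq_top hB hJ hspan
    _ ↔ w₁ = 0 ∧ w₂ = 0 := by
      rw [hN]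
      refine ⟨fun h => ?_, fun ⟨h₁, h₂⟩ => by simp [h₁, h₂]⟩
      obtain ⟨h₂, h₁⟩ := LinearIndependent.pair_iff.mp hz _ _ h
      exact ⟨neg_eq_zero.mp h₁, h₂⟩

end Nijenhuis

/-- The bracket `bk` of `𝔤₁`, bundled as a bilinear map so that `nijenhuisTensor` applies to it. -/
def bkBilin (lam r w₁ w₂ : ℝ) : (Fin 4 → ℝ) →ₗ[ℝ] (Fin 4 → ℝ) →ₗ[ℝ] (Fin 4 → ℝ) :=
  LinearMap.mk₂ ℝ (bk lam r w₁ w₂)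
    (fun _ _ _ => by simp only [bk, Pi.add_apply]; module)
    (fun _ _ _ => by simp only [bk, Pi.smul_apply, smul_eq_mul]; module)
    (fun _ _ _ => by simp only [bk, Pi.add_apply]; module)
    (fun _ _ _ => by simp only [bk, Pi.smul_apply, smul_eq_mul]; module)

/-- The almost complex structure `Jm`, bundled as a linear map so that `nijenhuisTensor` applies to
it. -/
def JmLin : (Fin 4 → ℝ) →ₗ[ℝ] (Fin 4 → ℝ) where
  toFun := Jm
  map_add' E F := by ext i; fin_cases i <;> simp [Jm] <;> ring
  map_smul' c E := by ext i; fin_cases i <;> simp [Jm]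

theorem bkBilin_apply (lam r w₁ w₂ : ℝ) (E F : Fin 4 → ℝ) :
    bkBilin lam r w₁ w₂ E F = bk lam r w₁ w₂ E F :=
  rfl

theorem JmLin_apply (E : Fin 4 → ℝ) : JmLin E = ![-E 1, E 0, -E 3, E 2] :=
  rfl

theorem NT_eq_nijenhuisTensor (lam r w₁ w₂ : ℝ) (E F : Fin 4 → ℝ) :
    NT lam r w₁ w₂ E F = nijenhuisTensor (bkBilin lam r w₁ w₂) JmLin E F :=
  rfl

theorem bkBilin_isAlt (lam r w₁ w₂ : ℝ) : (bkBilin lam r w₁ w₂).IsAlt := fun E => by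
  simp only [bkBilin_apply, bk]
  module

theorem JmLin_JmLin (E : Fin 4 → ℝ) : JmLin (JmLin E) = -E := by
  ext i
  fin_cases i <;> simp [JmLin_apply]

theorem JmLin_X : JmLin ![1, 0, 0, 0] = ![0, 1, 0, 0] := by
  simp [JmLin_apply]

theorem JmLin_Z : JmLin ![0, 0, 1, 0] = ![0, 0, 0, 1] := by
  simp [JmLin_apply]

theorem span_X_Z_JmLin_X_JmLin_Z :
    Submodule.span ℝ {![1, 0, 0, 0], ![0, 0, 1, 0], JmLin ![1, 0, 0, 0], JmLin ![0, 0, 1, 0]} =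
      ⊤ := by
  rw [Submodule.eq_top_iff', JmLin_X, JmLin_Z]
  intro E
  simp only [Submodule.mem_span_insert, Submodule.mem_span_singleton]
  refine ⟨E 0, _, ⟨E 2, _, ⟨E 1, _, ⟨E 3, rfl⟩, rfl⟩, rfl⟩, ?_⟩
  ext i
  fin_cases i <;> simp

theorem linearIndependent_Z_JmLin_Z :
    LinearIndependent ℝ ![![0, 0, 1, 0], JmLin ![0, 0, 1, 0]] := by
  rw [JmLin_Z, LinearIndependent.pair_iff]
  intro s t h
  exact ⟨by simpa using congrFun h 2, by simpa using congrFun h 3⟩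

theorem bkBilin_Z_X (lam r w₁ w₂ : ℝ) :
    bkBilin lam r w₁ w₂ ![0, 0, 1, 0] ![1, 0, 0, 0] = w₁ • JmLin ![0, 0, 1, 0] := by
  simp [JmLin_Z, bkBilin_apply, bk]

theorem bkBilin_Z_JmLin_X (lam r w₁ w₂ : ℝ) :
    bkBilin lam r w₁ w₂ ![0, 0, 1, 0] (JmLin ![1, 0, 0, 0]) = w₂ • JmLin ![0, 0, 1, 0] := by
  simp [JmLin_X, JmLin_Z, bkBilin_apply, bk]

theorem bkBilin_X_JmLin_Z (lam r w₁ w₂ : ℝ) :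
    bkBilin lam r w₁ w₂ ![1, 0, 0, 0] (JmLin ![0, 0, 1, 0]) = 0 := by
  simp [JmLin_Z, bkBilin_apply, bk]

theorem bkBilin_JmLin_X_JmLin_Z (lam r w₁ w₂ : ℝ) :
    bkBilin lam r w₁ w₂ (JmLin ![1, 0, 0, 0]) (JmLin ![0, 0, 1, 0]) = 0 := by
  simp [JmLin_X, JmLin_Z, bkBilin_apply, bk]

theorem g1_integrable_iff (lam r w₁ w₂ : ℝ) (hlam : lam ≠ 0) (hr : r ≠ 0) :
    (∀ E F : Fin 4 → ℝ, NT lam r w₁ w₂ E F = 0) ↔ (w₁ = 0 ∧ w₂ = 0) := by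
  simp only [NT_eq_nijenhuisTensor]
  exact g1_integrable_iff_general (bkBilin_isAlt lam r w₁ w₂) JmLin_JmLin
    span_X_Z_JmLin_X_JmLin_Z linearIndependent_Z_JmLin_Z (bkBilin_Z_X lam r w₁ w₂)
    (bkBilin_Z_JmLin_X lam r w₁ w₂) (bkBilin_X_JmLin_Z lam r w₁ w₂)
    (bkBilin_JmLin_X_JmLin_Z lam r w₁ w₂)

end
end
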